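/- Let φ: ℕ → (0,∞) be non-decreasing with φ(n) → ∞ and satisfying φ(n) ≥ n·log φ(n) for all n ≥ 1. Fix t ∈ ℕ and a cylinder I_t = I_t(b_1,…,b_t). Then there exist a constant c > 0 (independent of n and of the cylinder) and N ∈ ℕ such that for all n ≥ N, ℒ(A_n(φ) ∩ I_t) ≥ c·((φ(n) + n·(log φ(n))²)/φ(n)²)·|I_t|. -/

import Mathlib

/-!
Only lower bounds on conditional probabilities are needed. On a cylinder of order `n`, the point
`x` is a Möbius function of `Tⁿx` whose difference quotients are `1 / ((q + q'y)(q + q'z))` with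
`0 ≤ q' ≤ q`; they vary by a factor of at most `4`. Hence, given any event determined by the first
`n` partial quotients, `Tⁿx` falls into a set `B` with conditional probability at least `|B| / 4`
(`cyl_distortion`, `determined_lower`). The relevant sets `B` satisfy
`|{a₁ ≥ M}| ≥ 1 / (2M)` and `|{a₁ a₂ ≥ M}| ≥ log M / (4M)`, the latter by summing
`1 / (4aM)` over the values `a ≤ M` of `a₁` (`largeDigit_lower`, `largeProd_lower`).

Write `M = φ(n)`. If `a_n ≥ M`, then `k = n - 1` shows that `x ∈ A_n(φ)`, which gives the term of
order `1 / M` (`Aset_lower_single`). For the other term, split the indices between `t` and `n` into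
`m ≥ n / 4` disjoint consecutive pairs. Each pair has product at least `M` with conditional
probability at least `p = log M / (16M)` given the preceding digits, so no pair succeeds with
probability at most `(1 - p)^m` (`noHit_upper`). Since `n log M ≤ M`, `pm ≤ 1` and some pair
succeeds with probability at least `pm / 2`; given this, `a_n a_{n+1} ≥ M` still has probability
at least `p`. The product has order `n (log M)² / M²` (`Aset_lower_double`).
-/

open scoped ENNReal
open MeasureTheory Filter

/-- The Gauss map `T(x) = 1/x - ⌊1/x⌋`. -/
noncomputable def gaussMap (x : ℝ) : ℝ := 1 / x - ⌊1 / x⌋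

/-- The `n`-th partial quotient `a_n(x) = ⌊1 / T^{n-1}(x)⌋` (for `n ≥ 1`). -/
noncomputable def pq (x : ℝ) (n : ℕ) : ℕ := ⌊1 / (gaussMap^[n - 1] x)⌋₊

/-- The set `F₂(φ)` of irrational `x ∈ (0,1)` such that for infinitely many `n` there are
`1 ≤ k ≠ l ≤ n` with `a_k a_{k+1} ≥ φ(n)` and `a_l a_{l+1} ≥ φ(n)`. -/
def F2 (φ : ℕ → ℝ) : Set ℝ :=
  {x | x ∈ Set.Ioo (0 : ℝ) 1 ∧ Irrational x ∧
    {n : ℕ | ∃ k l : ℕ, 1 ≤ k ∧ k ≤ n ∧ 1 ≤ l ∧ l ≤ n ∧ k ≠ l ∧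
      φ n ≤ (pq x k : ℝ) * (pq x (k + 1) : ℝ) ∧
      φ n ≤ (pq x l : ℝ) * (pq x (l + 1) : ℝ)}.Infinite}

/-- The cylinder `I_n(a_1,…,a_n)`: irrationals in `(0,1)` whose first `n` partial quotients
are `a 1, …, a n`. -/
def cyl (n : ℕ) (a : ℕ → ℕ) : Set ℝ :=
  {x | x ∈ Set.Ioo (0 : ℝ) 1 ∧ Irrational x ∧ ∀ i : ℕ, 1 ≤ i → i ≤ n → pq x i = a i}

/-- The set `A_n(φ)` of irrational `x ∈ (0,1)` for which there is `1 ≤ k < n` with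
`a_k a_{k+1} ≥ φ(n)` and `a_n a_{n+1} ≥ φ(n)`. -/
def Aset (φ : ℕ → ℝ) (n : ℕ) : Set ℝ :=
  {x | x ∈ Set.Ioo (0 : ℝ) 1 ∧ Irrational x ∧ ∃ k : ℕ, 1 ≤ k ∧ k < n ∧
    φ n ≤ (pq x k : ℝ) * (pq x (k + 1) : ℝ) ∧
    φ n ≤ (pq x n : ℝ) * (pq x (n + 1) : ℝ)}

/-! ### Inverse branches and bounded distortion -/

/-- The irrational numbers of the unit interval, on which the Gauss map acts. -/
def irr01 : Set ℝ := {x | x ∈ Set.Ioo (0 : ℝ) 1 ∧ Irrational x}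

lemma inv_branch {b : ℕ} (hb : 1 ≤ b) {y : ℝ} (hy : y ∈ irr01) :
    1 / ((b : ℝ) + y) ∈ irr01 ∧ gaussMap (1 / ((b : ℝ) + y)) = y ∧
      ⌊1 / (1 / ((b : ℝ) + y))⌋₊ = b := by
  obtain ⟨⟨h0, h1⟩, hi⟩ := hy
  have hb' : (1 : ℝ) ≤ b := by exact_mod_cast hb
  refine ⟨⟨⟨by positivity, ?_⟩, ?_⟩, ?_, ?_⟩
  · rw [div_lt_one (by positivity)]; linarith
  · rw [one_div]; exact (hi.natCast_add b).inv
  · unfold gaussMap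
    rw [one_div_one_div]
    have : ⌊(b : ℝ) + y⌋ = (b : ℤ) := by
      rw [Int.floor_eq_iff]; constructor <;> push_cast <;> linarith
    rw [this]; push_cast; ring
  · rw [one_div_one_div, Nat.floor_eq_iff (by positivity)]
    constructor <;> linarith

lemma gauss_decomp {x : ℝ} (hx : x ∈ irr01) :
    gaussMap x ∈ irr01 ∧ 1 ≤ ⌊1 / x⌋₊ ∧ x = 1 / ((⌊1 / x⌋₊ : ℝ) + gaussMap x) := by
  obtain ⟨⟨h0, h1⟩, hi⟩ := hx
  have h2 : 1 ≤ 1 / x := by rw [le_div_iff₀ h0]; linarith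
  have hfl : ((⌊1 / x⌋₊ : ℕ) : ℝ) = ((⌊1 / x⌋ : ℤ) : ℝ) := by
    rw [← Int.natCast_floor_eq_floor (by positivity)]; simp
  have hir : Irrational (gaussMap x) := by
    unfold gaussMap
    rw [one_div]; exact hi.inv.sub_intCast _
  refine ⟨⟨⟨?_, ?_⟩, hir⟩, ?_, ?_⟩
  · have : 0 ≤ gaussMap x := by unfold gaussMap; linarith [Int.floor_le (1 / x)]
    exact lt_of_le_of_ne this (fun h => hir.ne_zero h.symm)
  · unfold gaussMap; linarith [Int.lt_floor_add_one (1 / x)]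
  · exact Nat.le_floor (by simpa using h2)
  · rw [hfl]; unfold gaussMap; simp

/-- The inverse branch `y ↦ 1/(b₁ + 1/(b₂ + ⋯ + 1/(bₙ + y)))` of the `n`-th iterate of the
Gauss map. -/
noncomputable def branch (b : ℕ → ℕ) : ℕ → ℝ → ℝ
  | 0, y => y
  | n + 1, y => branch b n (1 / ((b (n + 1) : ℝ) + y))

lemma branch_spec (b : ℕ → ℕ) (n : ℕ) (hb : ∀ i, 1 ≤ i → i ≤ n → 1 ≤ b i) {y : ℝ}
    (hy : y ∈ irr01) :
    branch b n y ∈ cyl n b ∧ gaussMap^[n] (branch b n y) = y := by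
  induction n generalizing y with
  | zero => exact ⟨⟨hy.1, hy.2, fun i h1 h2 => by omega⟩, rfl⟩
  | succ n ih =>
    obtain ⟨h1, h2, h3⟩ := inv_branch (hb (n + 1) (by omega) le_rfl) hy
    obtain ⟨h4, h5⟩ := ih (fun i hi hi' => hb i hi (by omega)) h1
    refine ⟨⟨h4.1, h4.2.1, fun i hi hi' => ?_⟩, ?_⟩
    · rcases Nat.lt_or_ge i (n + 1) with h | h
      · exact h4.2.2 i hi (by omega)
      · obtain rfl : i = n + 1 := by omega
        simp only [pq, branch, Nat.add_sub_cancel]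
        rw [h5, h3]
    · rw [Function.iterate_succ_apply', branch, h5, h2]

lemma iterate_mem {x : ℝ} (hx : x ∈ irr01) (n : ℕ) : gaussMap^[n] x ∈ irr01 := by
  induction n with
  | zero => exact hx
  | succ n ih => rw [Function.iterate_succ_apply']; exact (gauss_decomp ih).1

lemma one_le_pq {x : ℝ} (hx : x ∈ irr01) (n : ℕ) : 1 ≤ pq x n :=
  (gauss_decomp (iterate_mem hx (n - 1))).2.1

lemma branch_iterate (b : ℕ → ℕ) (n : ℕ) {x : ℝ} (hx : x ∈ cyl n b) :
    branch b n (gaussMap^[n] x) = x := by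
  induction n with
  | zero => rfl
  | succ n ih =>
    have hx' : x ∈ cyl n b := ⟨hx.1, hx.2.1, fun i h1 h2 => hx.2.2 i h1 (by omega)⟩
    have h := (gauss_decomp (iterate_mem ⟨hx.1, hx.2.1⟩ n)).2.2
    have h2 := hx.2.2 (n + 1) (by omega) le_rfl
    simp only [pq, Nat.add_sub_cancel] at h2
    rw [h2] at h
    rw [Function.iterate_succ_apply', branch, ← h, ih hx']

/-- The difference formula for Möbius maps of determinant `±1`; `q` and `q'` are the
denominators of the last two convergents. -/
lemma branch_dist (b : ℕ → ℕ) (n : ℕ) (hb : ∀ i, 1 ≤ i → i ≤ n → 1 ≤ b i) :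
    ∃ q q' : ℝ, 0 < q ∧ 0 ≤ q' ∧ q' ≤ q ∧ ∀ x y : ℝ, 0 ≤ x → 0 ≤ y →
      |branch b n x - branch b n y| = |x - y| / ((q + q' * x) * (q + q' * y)) := by
  induction n with
  | zero => exact ⟨1, 0, by norm_num, le_rfl, by norm_num, fun x y _ _ => by simp [branch]⟩
  | succ n ih =>
    obtain ⟨q, q', hq, hq', hle, h⟩ := ih (fun i hi hi' => hb i hi (by omega))
    have hb1 : (1 : ℝ) ≤ b (n + 1) := by exact_mod_cast hb (n + 1) (by omega) le_rfl
    generalize hB : (b (n + 1) : ℝ) = B at hb1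
    refine ⟨q * B + q', q, by positivity, hq.le, by nlinarith, fun x y hx hy => ?_⟩
    simp only [branch, hB]
    rw [h _ _ (by positivity) (by positivity)]
    have e : 1 / (B + x) - 1 / (B + y) = (y - x) / ((B + x) * (B + y)) := by
      field_simp; ring
    rw [e, abs_div, abs_of_pos (a := (B + x) * (B + y)) (by positivity), abs_sub_comm y x]
    have hx' : B + x ≠ 0 := by positivity
    have hy' : B + y ≠ 0 := by positivity
    have e1 : q * B + q' + q * x = (q + q' * (1 / (B + x))) * (B + x) := by
      field_simp; ring
    have e2 : q * B + q' + q * y = (q + q' * (1 / (B + y))) * (B + y) := by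
      field_simp; ring
    rw [e1, e2, div_div]
    congr 1; ring

/-- Bounded distortion: up to a factor `4`, the law of `Tⁿx` on a cylinder of order `n`
dominates Lebesgue measure. -/
lemma cyl_distortion (b : ℕ → ℕ) (n : ℕ) (hb : ∀ i, 1 ≤ i → i ≤ n → 1 ≤ b i)
    {S : Set ℝ} (hS : S ⊆ irr01) :
    volume S * volume (cyl n b) ≤ 4 * volume (cyl n b ∩ gaussMap^[n] ⁻¹' S) := by
  obtain ⟨q, q', hq, hq', hle, h⟩ := branch_dist b n hb
  have hcyl : cyl n b ⊆ branch b n '' Set.Ioo 0 1 := fun x hx =>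
    ⟨gaussMap^[n] x, (iterate_mem ⟨hx.1, hx.2.1⟩ n).1, branch_iterate b n hx⟩
  have h1 : volume (cyl n b) ≤ ENNReal.ofReal (1 / q ^ 2) := by
    have hl : LipschitzOnWith (1 / q ^ 2).toNNReal (branch b n) (Set.Ioo 0 1) := by
      refine LipschitzOnWith.of_dist_le_mul fun x hx y hy => ?_
      have hx0 := hx.1.le
      have hy0 := hy.1.le
      rw [Real.dist_eq, Real.dist_eq, h x y hx0 hy0,
        Real.coe_toNNReal _ (by positivity), div_eq_mul_one_div, mul_comm]
      gcongr
      rw [sq]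
      gcongr <;> nlinarith [mul_nonneg hq' hx0, mul_nonneg hq' hy0]
    have := hl.hausdorffMeasure_image_le (d := 1) zero_le_one
    rw [hausdorffMeasure_real] at this
    refine (measure_mono hcyl).trans (this.trans ?_)
    simp [ENNReal.ofReal]
  have h2 : volume S ≤ ENNReal.ofReal (4 * q ^ 2) * volume (cyl n b ∩ gaussMap^[n] ⁻¹' S) := by
    have hl : LipschitzOnWith (4 * q ^ 2).toNNReal (gaussMap^[n])
        (cyl n b ∩ gaussMap^[n] ⁻¹' S) := by
      refine LipschitzOnWith.of_dist_le_mul fun x hx y hy => ?_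
      have hx1 := (hS hx.2).1
      have hy1 := (hS hy.2).1
      have e := h _ _ hx1.1.le hy1.1.le
      rw [branch_iterate b n hx.1, branch_iterate b n hy.1] at e
      rw [Real.dist_eq, Real.dist_eq, e, Real.coe_toNNReal _ (by positivity)]
      have p1 := mul_nonneg hq' hx1.1.le
      have p2 := mul_nonneg hq' hy1.1.le
      rw [mul_div_assoc', le_div_iff₀ (by positivity), mul_comm]
      refine mul_le_mul_of_nonneg_right ?_ (abs_nonneg _)
      have : q + q' * gaussMap^[n] x ≤ 2 * q := by nlinarith [hx1.2]
      have : q + q' * gaussMap^[n] y ≤ 2 * q := by nlinarith [hy1.2]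
      calc _ ≤ (2 * q) * (2 * q) := by gcongr
        _ = _ := by ring
    have := hl.hausdorffMeasure_image_le (d := 1) zero_le_one
    rw [hausdorffMeasure_real] at this
    have hsub : S ⊆ gaussMap^[n] '' (cyl n b ∩ gaussMap^[n] ⁻¹' S) := fun y hy => by
      obtain ⟨h3, h4⟩ := branch_spec b n hb (hS hy)
      exact ⟨branch b n y, ⟨h3, by simpa [h4] using hy⟩, h4⟩
    refine (measure_mono hsub).trans (this.trans ?_)
    simp [ENNReal.ofReal]
  calc volume S * volume (cyl n b)
      ≤ (ENNReal.ofReal (4 * q ^ 2) * volume (cyl n b ∩ gaussMap^[n] ⁻¹' S)) *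
          ENNReal.ofReal (1 / q ^ 2) := by gcongr
    _ = ENNReal.ofReal (4 * q ^ 2 * (1 / q ^ 2)) * volume (cyl n b ∩ gaussMap^[n] ⁻¹' S) := by
        rw [ENNReal.ofReal_mul (p := 4 * q ^ 2) (by positivity)]; ring
    _ = _ := by
        have : 4 * q ^ 2 * (1 / q ^ 2) = 4 := by field_simp
        rw [this]; norm_num

/-! ### Measurability -/

lemma measurable_gaussMap : Measurable gaussMap := by
  unfold gaussMap
  have : Measurable fun x : ℝ => 1 / x := by fun_prop
  exact this.sub ((measurable_from_top (f := fun k : ℤ => (k : ℝ))).comp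
    (Int.measurable_floor.comp this))

lemma measurable_pq (n : ℕ) : Measurable fun x => pq x n := by
  unfold pq
  have := measurable_gaussMap.iterate (n - 1)
  exact Nat.measurable_floor.comp (this.const_div 1)

lemma measurableSet_irr01 : MeasurableSet irr01 := by
  have : MeasurableSet {x : ℝ | Irrational x} :=
    (Set.countable_range ((↑) : ℚ → ℝ)).measurableSet.compl
  exact measurableSet_Ioo.inter this

lemma volume_irr01_inter (S : Set ℝ) : volume (irr01 ∩ S) = volume (Set.Ioo 0 1 ∩ S) := by
  have hc : volume (Set.range ((↑) : ℚ → ℝ)) = 0 := (Set.countable_range _).measure_zero _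
  refine le_antisymm (measure_mono (fun x hx => ⟨hx.1.1, hx.2⟩)) ?_
  calc volume (Set.Ioo 0 1 ∩ S) ≤ volume (irr01 ∩ S ∪ Set.range ((↑) : ℚ → ℝ)) := by
        refine measure_mono fun x hx => ?_
        by_cases h : Irrational x
        · exact Or.inl ⟨⟨hx.1, h⟩, hx.2⟩
        · exact Or.inr (by simpa [Irrational] using h)
    _ ≤ volume (irr01 ∩ S) + 0 := by rw [← hc]; exact measure_union_le _ _
    _ = _ := by simp

lemma measurableSet_cyl (n : ℕ) (a : ℕ → ℕ) : MeasurableSet (cyl n a) := by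
  have : cyl n a = irr01 ∩ ⋂ i : ℕ, ⋂ _ : 1 ≤ i, ⋂ _ : i ≤ n, {x | pq x i = a i} := by
    ext x; simp [cyl, irr01, and_assoc]
  rw [this]
  refine measurableSet_irr01.inter (.iInter fun i => .iInter fun _ => .iInter fun _ => ?_)
  exact measurable_pq i (measurableSet_singleton _)

/-! ### Quasi-independence of the future from the past -/

/-- `S` is a union of cylinders of order `n`: membership depends only on the first `n`
partial quotients. -/
def DeterminedBy (n : ℕ) (S : Set ℝ) : Prop :=
  S ⊆ irr01 ∧ ∀ x ∈ S, ∀ y ∈ irr01, (∀ i, 1 ≤ i → i ≤ n → pq x i = pq y i) → y ∈ S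

/-- A finite word as a digit sequence indexed from `1`, padded with zeros. -/
def wordSeq {n : ℕ} (w : Fin n → ℕ) (i : ℕ) : ℕ := if h : i - 1 < n then w ⟨i - 1, h⟩ else 0

lemma volume_eq_tsum_cyl (n : ℕ) {S : Set ℝ} (hm : MeasurableSet S) (hS : S ⊆ irr01) :
    volume S = ∑' w : Fin n → ℕ, volume (S ∩ cyl n (wordSeq w)) := by
  rw [← measure_iUnion]
  · congr 1
    ext x
    simp only [Set.mem_iUnion, Set.mem_inter_iff]
    constructor
    · intro hx
      refine ⟨fun i => pq x (i + 1), hx, (hS hx).1, (hS hx).2, fun i h1 h2 => ?_⟩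
      have : i - 1 < n := by omega
      simp only [wordSeq, this, dite_true]
      congr 1; omega
    · rintro ⟨_, hx, _⟩; exact hx
  · intro w w' hne
    refine Set.disjoint_left.2 fun x hx hx' => hne ?_
    funext i
    have h1 := hx.2.2.2 (i + 1) (by omega) (by omega)
    have h2 := hx'.2.2.2 (i + 1) (by omega) (by omega)
    simpa [wordSeq] using h1.symm.trans h2
  · exact fun w => hm.inter (measurableSet_cyl _ _)

/-- Quasi-independence: conditionally on an event determined by the first `n` partial
quotients, `Tⁿx` lies in `B` with probability at least `|B| / 4`. -/
lemma determined_lower {n : ℕ} {S B : Set ℝ} (hm : MeasurableSet S) (hS : DeterminedBy n S)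
    (hBm : MeasurableSet B) (hB : B ⊆ irr01) :
    volume B * volume S ≤ 4 * volume (S ∩ gaussMap^[n] ⁻¹' B) := by
  rw [volume_eq_tsum_cyl n hm hS.1,
    volume_eq_tsum_cyl n (hm.inter (measurable_gaussMap.iterate n hBm))
      (Set.inter_subset_left.trans hS.1), ← ENNReal.tsum_mul_left, ← ENNReal.tsum_mul_left]
  refine ENNReal.tsum_le_tsum fun w => ?_
  rcases (S ∩ cyl n (wordSeq w)).eq_empty_or_nonempty with h | ⟨x, hxS, hxc⟩
  · rw [h]; simp
  have hsub : cyl n (wordSeq w) ⊆ S := fun y hy =>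
    hS.2 x hxS y ⟨hy.1, hy.2.1⟩ fun i h1 h2 => (hxc.2.2 i h1 h2).trans (hy.2.2 i h1 h2).symm
  have e : S ∩ gaussMap^[n] ⁻¹' B ∩ cyl n (wordSeq w) =
      cyl n (wordSeq w) ∩ gaussMap^[n] ⁻¹' B := by
    ext y
    exact ⟨fun h => ⟨h.2, h.1.2⟩, fun h => ⟨⟨hsub h.1, h.2⟩, h.1⟩⟩
  rw [e, Set.inter_eq_right.2 hsub]
  refine cyl_distortion _ n (fun i h1 h2 => ?_) hB
  rw [← hxc.2.2 i h1 h2]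
  exact one_le_pq (hS.1 hxS) i

lemma volume_ne_top {S : Set ℝ} (hS : S ⊆ irr01) : volume S ≠ ∞ :=
  ne_top_of_le_ne_top (b := volume (Set.Ioo (0 : ℝ) 1)) (by simp)
    (measure_mono fun _ hx => (hS hx).1)

lemma determined_lower_real {n : ℕ} {S B : Set ℝ} (hm : MeasurableSet S)
    (hS : DeterminedBy n S) (hBm : MeasurableSet B) (hB : B ⊆ irr01) {p : ℝ}
    (hp : 4 * p ≤ volume.real B) :
    p * volume.real S ≤ volume.real (S ∩ gaussMap^[n] ⁻¹' B) := by
  have h := determined_lower hm hS hBm hB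
  have hfin := volume_ne_top (S := S ∩ gaussMap^[n] ⁻¹' B) (Set.inter_subset_left.trans hS.1)
  have h' := ENNReal.toReal_mono (ENNReal.mul_ne_top (by norm_num) hfin) h
  rw [ENNReal.toReal_mul, ENNReal.toReal_mul] at h'
  change volume.real B * volume.real S ≤ 4 * volume.real _ at h'
  nlinarith [measureReal_nonneg (μ := volume) (s := S)]

lemma pq_iterate (x : ℝ) (n j : ℕ) (hj : 1 ≤ j) : pq (gaussMap^[n] x) j = pq x (n + j) := by
  unfold pq
  rw [← Function.iterate_add_apply]
  congr 4; omega

/-! ### Events on the first two partial quotients -/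

/-- The event `a₁ ≥ M`. -/
def largeDigit (M : ℝ) : Set ℝ := irr01 ∩ {y | M ≤ (pq y 1 : ℝ)}

/-- The event `a₁ a₂ ≥ M`. -/
def largeProd (M : ℝ) : Set ℝ := irr01 ∩ {y | M ≤ (pq y 1 : ℝ) * (pq y 2 : ℝ)}

lemma measurable_pq_cast (n : ℕ) : Measurable fun x => (pq x n : ℝ) :=
  (measurable_from_top (f := fun k : ℕ => (k : ℝ))).comp (measurable_pq n)

lemma measurableSet_largeDigit (M : ℝ) : MeasurableSet (largeDigit M) :=
  measurableSet_irr01.inter (measurableSet_le measurable_const (measurable_pq_cast 1))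

lemma measurableSet_largeProd (M : ℝ) : MeasurableSet (largeProd M) :=
  measurableSet_irr01.inter (measurableSet_le measurable_const
    ((measurable_pq_cast 1).mul (measurable_pq_cast 2)))

lemma largeDigit_lower {M : ℝ} (hM : 1 ≤ M) : 1 / (2 * M) ≤ volume.real (largeDigit M) := by
  have hsub : irr01 ∩ Set.Ioo 0 (1 / (M + 1)) ⊆ largeDigit M := by
    rintro y ⟨hy, h0, h1⟩
    refine ⟨hy, ?_⟩
    have h2 : M + 1 < 1 / y := by
      rw [lt_div_iff₀ h0]; rw [lt_div_iff₀ (by positivity)] at h1; linarith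
    have h3 := Nat.lt_floor_add_one (1 / y)
    simp only [Set.mem_ofPred_eq, pq, Nat.sub_self, Function.iterate_zero, id]
    linarith
  have h1 : 1 / (M + 1) ≤ 1 := by rw [div_le_one (by positivity)]; linarith
  have hv : volume (irr01 ∩ Set.Ioo 0 (1 / (M + 1))) = ENNReal.ofReal (1 / (M + 1)) := by
    rw [volume_irr01_inter, Set.inter_eq_right.2 (Set.Ioo_subset_Ioo_right h1), Real.volume_Ioo,
      sub_zero]
  calc 1 / (2 * M) ≤ 1 / (M + 1) := by gcongr; linarith
    _ = volume.real (irr01 ∩ Set.Ioo 0 (1 / (M + 1))) := by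
        rw [Measure.real, hv, ENNReal.toReal_ofReal (by positivity)]
    _ ≤ _ := measureReal_mono hsub (volume_ne_top Set.inter_subset_left)

/-- The part of `largeProd M` on which `a₁ = a` contains an interval of length at least
`1 / (4 a M)`. -/
lemma largeProd_piece {M : ℝ} {a : ℕ} (ha : 1 ≤ a) (haM : (a : ℝ) ≤ M) :
    1 / (4 * M) * (1 / (a : ℝ)) ≤ volume.real (largeProd M ∩ {y | pq y 1 = a}) := by
  have ha' : (1 : ℝ) ≤ a := by exact_mod_cast ha
  generalize hA : (a : ℝ) = A at *
  -- `0 < T y < s` forces `a₂ > 1 / s - 1 = M / a`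
  have hM0 : 0 < M := by linarith
  set s : ℝ := A / (M + A) with hs
  have hs0 : 0 < s := by positivity
  have hs1 : s ≤ 1 := by rw [hs, div_le_one (by positivity)]; linarith
  have hsub : irr01 ∩ Set.Ioo (1 / (A + s)) (1 / A) ⊆ largeProd M ∩ {y | pq y 1 = a} := by
    rintro y ⟨hy, h1, h2⟩
    have hy0 := hy.1.1
    have h3 : A < 1 / y := by
      rw [lt_div_iff₀ hy0]; rw [lt_div_iff₀ (by positivity)] at h2; linarith
    have h4 : 1 / y < A + s := by
      rw [div_lt_iff₀ hy0]; rw [div_lt_iff₀ (by positivity)] at h1; linarith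
    have hf : ⌊1 / y⌋₊ = a := by
      rw [Nat.floor_eq_iff (by positivity), hA]; constructor <;> linarith
    have hp1 : pq y 1 = a := by simpa [pq] using hf
    have hd := gauss_decomp hy
    have hg0 := hd.1.1.1
    have hgs : gaussMap y < s := by
      have e : 1 / y = A + gaussMap y := by
        conv_lhs => rw [hd.2.2]
        rw [one_div_one_div, hf, hA]
      linarith
    have hp2 : M / A ≤ (pq y 2 : ℝ) := by
      have h5 := Nat.lt_floor_add_one (1 / gaussMap y)
      have h6 : 1 / s < 1 / gaussMap y := by gcongr
      have h7 : 1 / s = M / A + 1 := by rw [hs]; field_simp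
      have h8 : pq y 2 = ⌊1 / gaussMap y⌋₊ := by simp [pq]
      rw [h8]; linarith
    refine ⟨⟨hy, ?_⟩, hp1⟩
    simp only [Set.mem_ofPred_eq]
    rw [hp1, hA]
    calc M = A * (M / A) := by field_simp
      _ ≤ _ := by gcongr
  have hle : 1 / (A + s) ≤ 1 / A := by gcongr; linarith
  have hA1 : 1 / A ≤ 1 := by rw [div_le_one (by positivity)]; linarith
  have hv : volume (irr01 ∩ Set.Ioo (1 / (A + s)) (1 / A)) =
      ENNReal.ofReal (1 / A - 1 / (A + s)) := by
    rw [volume_irr01_inter, Set.inter_eq_right.2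
      (Set.Ioo_subset_Ioo (by positivity) hA1), Real.volume_Ioo]
  calc 1 / (4 * M) * (1 / A) ≤ 1 / A - 1 / (A + s) := by
        have e : 1 / A - 1 / (A + s) = 1 / (A * (M + A + 1)) := by
          have e' : A + s = A * (M + A + 1) / (M + A) := by rw [hs]; field_simp
          rw [e']; field_simp; ring
        rw [e, div_mul_div_comm, one_mul]
        refine one_div_le_one_div_of_le (by positivity) ?_
        nlinarith
    _ = volume.real (irr01 ∩ Set.Ioo (1 / (A + s)) (1 / A)) := by
        rw [Measure.real, hv, ENNReal.toReal_ofReal (by linarith)]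
    _ ≤ _ := measureReal_mono hsub (volume_ne_top fun y hy => hy.1.1)

lemma largeProd_lower {M : ℝ} (hM : 1 ≤ M) :
    Real.log M / (4 * M) ≤ volume.real (largeProd M) := by
  have hM0 : 0 < M := by linarith
  have hfl : ∀ a ∈ Finset.Icc 1 ⌊M⌋₊, 1 ≤ a ∧ (a : ℝ) ≤ M := fun a ha => by
    rw [Finset.mem_Icc] at ha
    exact ⟨ha.1, (Nat.cast_le.2 ha.2).trans (Nat.floor_le hM0.le)⟩
  have hharm : Real.log M ≤ ∑ a ∈ Finset.Icc 1 ⌊M⌋₊, 1 / (a : ℝ) := by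
    have h1 := log_add_one_le_harmonic ⌊M⌋₊
    rw [harmonic_eq_sum_Icc] at h1
    push_cast at h1
    calc Real.log M ≤ Real.log ((⌊M⌋₊ : ℝ) + 1) :=
          Real.log_le_log hM0 (Nat.lt_floor_add_one M).le
      _ ≤ _ := by simpa using h1
  calc Real.log M / (4 * M) = 1 / (4 * M) * Real.log M := by ring
    _ ≤ 1 / (4 * M) * ∑ a ∈ Finset.Icc 1 ⌊M⌋₊, 1 / (a : ℝ) := by gcongr
    _ = ∑ a ∈ Finset.Icc 1 ⌊M⌋₊, 1 / (4 * M) * (1 / (a : ℝ)) := Finset.mul_sum ..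
    _ ≤ ∑ a ∈ Finset.Icc 1 ⌊M⌋₊, volume.real (largeProd M ∩ {y | pq y 1 = a}) :=
        Finset.sum_le_sum fun a ha => largeProd_piece (hfl a ha).1 (hfl a ha).2
    _ = volume.real (⋃ a ∈ Finset.Icc 1 ⌊M⌋₊, largeProd M ∩ {y | pq y 1 = a}) := by
        refine (measureReal_biUnion_finset ?_ ?_ ?_).symm
        · intro a _ a' _ hne
          exact Set.disjoint_left.2 fun x hx hx' => hne (hx.2.symm.trans hx'.2)
        · exact fun a _ => (measurableSet_largeProd M).inter
            (measurable_pq 1 (measurableSet_singleton a))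
        · exact fun a _ => volume_ne_top fun y hy => hy.1.1
    _ ≤ _ := measureReal_mono (Set.iUnion₂_subset fun a _ => Set.inter_subset_left)
        (volume_ne_top Set.inter_subset_left)

/-! ### Pairs with a large product inside a cylinder -/

/-- The points of `cyl t b` for which none of the first `j` disjoint pairs
`(a_{t+2i+1}, a_{t+2i+2})`, `i < j`, has product at least `M`. -/
def noHit (t : ℕ) (b : ℕ → ℕ) (M : ℝ) (j : ℕ) : Set ℝ :=
  cyl t b ∩ {x | ∀ i < j, (pq x (t + 2 * i + 1) : ℝ) * (pq x (t + 2 * i + 2) : ℝ) < M}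

lemma measurableSet_noHit (t : ℕ) (b : ℕ → ℕ) (M : ℝ) (j : ℕ) :
    MeasurableSet (noHit t b M j) := by
  refine (measurableSet_cyl t b).inter ?_
  have : {x | ∀ i < j, (pq x (t + 2 * i + 1) : ℝ) * (pq x (t + 2 * i + 2) : ℝ) < M} =
      ⋂ i : ℕ, ⋂ _ : i < j, {x | (pq x (t + 2 * i + 1) : ℝ) * (pq x (t + 2 * i + 2) : ℝ) < M} := by
    ext; simp
  rw [this]
  exact .iInter fun i => .iInter fun _ => measurableSet_lt
    ((measurable_pq_cast _).mul (measurable_pq_cast _)) measurable_const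

lemma cyl_determined (t : ℕ) (b : ℕ → ℕ) {n : ℕ} (hn : t ≤ n) : DeterminedBy n (cyl t b) :=
  ⟨fun _ hx => ⟨hx.1, hx.2.1⟩, fun _ hx _ hy h => ⟨hy.1, hy.2, fun i h1 h2 =>
    (h i h1 (by omega)).symm.trans (hx.2.2 i h1 h2)⟩⟩

lemma noHit_determined (t : ℕ) (b : ℕ → ℕ) (M : ℝ) (j : ℕ) {n : ℕ} (hn : t + 2 * j ≤ n) :
    DeterminedBy n (noHit t b M j) := by
  have hc := cyl_determined t b (n := n) (by omega)
  refine ⟨fun x hx => hc.1 hx.1, fun x hx y hy h => ⟨hc.2 x hx.1 y hy h, fun i hi => ?_⟩⟩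
  rw [← h _ (by omega) (by omega), ← h _ (by omega) (by omega)]
  exact hx.2 i hi

lemma determined_diff {n : ℕ} {S S' : Set ℝ} (h : DeterminedBy n S) (h' : DeterminedBy n S') :
    DeterminedBy n (S \ S') :=
  ⟨fun _ hx => h.1 hx.1, fun x hx y hy hxy => ⟨h.2 x hx.1 y hy hxy, fun hyS =>
    hx.2 (h'.2 y hyS x (h.1 hx.1) fun i h1 h2 => (hxy i h1 h2).symm)⟩⟩

/-- Each further pair succeeds with conditional probability at least `log M / (16 M)`. -/
lemma noHit_upper (t : ℕ) (b : ℕ → ℕ) {M : ℝ} (hM : 1 ≤ M) (j : ℕ)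
    (hp1 : Real.log M / (16 * M) ≤ 1) :
    volume.real (noHit t b M j) ≤
      (1 - Real.log M / (16 * M)) ^ j * volume.real (cyl t b) := by
  have hp0 : 0 ≤ 1 - Real.log M / (16 * M) := by linarith
  induction j with
  | zero => simp [noHit]
  | succ j ih =>
    have hdet := noHit_determined t b M j le_rfl
    have h := determined_lower_real (measurableSet_noHit t b M j) hdet
      (measurableSet_largeProd M) Set.inter_subset_left (p := Real.log M / (16 * M))
      (by refine le_trans (le_of_eq ?_) (largeProd_lower hM); ring)
    have e : noHit t b M (j + 1) =
        noHit t b M j \ (noHit t b M j ∩ gaussMap^[t + 2 * j] ⁻¹' largeProd M) := by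
      ext x
      constructor
      · intro hx
        refine ⟨⟨hx.1, fun i hi => hx.2 i (by omega)⟩, fun hx' => ?_⟩
        have h1 := hx'.2.2
        simp only [Set.mem_ofPred_eq] at h1
        rw [pq_iterate _ _ _ le_rfl, pq_iterate _ _ _ one_le_two] at h1
        exact absurd (hx.2 j (by omega)) (not_lt.2 h1)
      · rintro ⟨hx, hx'⟩
        refine ⟨hx.1, fun i hi => ?_⟩
        rcases Nat.lt_or_ge i j with hij | hij
        · exact hx.2 i hij
        · obtain rfl : i = j := by omega
          by_contra hcon
          refine hx' ⟨hx, iterate_mem (hdet.1 hx) _, ?_⟩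
          simp only [Set.mem_ofPred_eq]
          rw [pq_iterate _ _ _ le_rfl, pq_iterate _ _ _ one_le_two]
          exact not_lt.1 hcon
    rw [e, measureReal_sdiff Set.inter_subset_left
      ((measurableSet_noHit t b M j).inter
        (measurable_gaussMap.iterate _ (measurableSet_largeProd M)))
      (volume_ne_top hdet.1)]
    rw [pow_succ]
    calc _ ≤ (1 - Real.log M / (16 * M)) * volume.real (noHit t b M j) := by linarith
      _ ≤ (1 - Real.log M / (16 * M)) *
          ((1 - Real.log M / (16 * M)) ^ j * volume.real (cyl t b)) := by gcongr
      _ = _ := by ring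

/-! ### The two lower bounds -/

/-- The contribution of the configurations with `a_n ≥ φ(n)`, for which `k = n - 1` works. -/
lemma Aset_lower_single (φ : ℕ → ℝ) (t : ℕ) (b : ℕ → ℕ) {n : ℕ} (hn : t + 2 ≤ n)
    (hφ : 1 ≤ φ n) :
    1 / (8 * φ n) * volume.real (cyl t b) ≤ volume.real (Aset φ n ∩ cyl t b) := by
  have hdet := cyl_determined t b (n := n - 1) (by omega)
  refine (determined_lower_real (measurableSet_cyl t b) hdet
    (measurableSet_largeDigit (φ n)) Set.inter_subset_left (p := 1 / (8 * φ n))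
    (le_trans (le_of_eq (by ring)) (largeDigit_lower hφ))).trans ?_
  refine measureReal_mono ?_ (volume_ne_top fun x hx => ⟨hx.2.1, hx.2.2.1⟩)
  rintro x ⟨hx, hx'⟩
  have h1 := hx'.2
  simp only [Set.mem_ofPred_eq] at h1
  rw [pq_iterate _ _ _ le_rfl, Nat.sub_add_cancel (by omega)] at h1
  have hge : ∀ i, (1 : ℝ) ≤ pq x i := fun i => by exact_mod_cast one_le_pq (hdet.1 hx) i
  refine ⟨⟨hx.1, hx.2.1, n - 1, by omega, by omega, ?_, ?_⟩, hx⟩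
  · rw [Nat.sub_add_cancel (by omega)]
    nlinarith [hge (n - 1)]
  · nlinarith [hge (n + 1)]

/-- The contribution of the configurations with two large products at disjoint places. -/
lemma Aset_lower_double (φ : ℕ → ℝ) (t : ℕ) (b : ℕ → ℕ) {n : ℕ} (hn : 2 * t + 4 ≤ n)
    (hφ : 1 ≤ φ n) (hlog : 0 ≤ Real.log (φ n)) (hbig : (n : ℝ) * Real.log (φ n) ≤ φ n) :
    1 / 2048 * ((n : ℝ) * Real.log (φ n) ^ 2 / φ n ^ 2) * volume.real (cyl t b) ≤
      volume.real (Aset φ n ∩ cyl t b) := by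
  obtain ⟨m, hm⟩ : ∃ m, m = (n - 1 - t) / 2 := ⟨_, rfl⟩
  have hm1 : t + 2 * m ≤ n - 1 := by omega
  have hm2 : n ≤ 4 * m := by omega
  have hm3 : m ≤ n := by omega
  have hm2' : (n : ℝ) ≤ 4 * m := by exact_mod_cast hm2
  have hm3' : (m : ℝ) ≤ n := by exact_mod_cast hm3
  have hn1 : (1 : ℝ) ≤ n := by exact_mod_cast (by omega : 1 ≤ n)
  have hφ0 : 0 < φ n := by linarith
  obtain ⟨p, hp⟩ : ∃ p, p = Real.log (φ n) / (16 * φ n) := ⟨_, rfl⟩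
  have hp0 : 0 ≤ p := by rw [hp]; positivity
  have hnp : n * p ≤ 1 := by
    rw [hp, ← mul_div_assoc, div_le_one (by positivity)]; linarith
  have hp1 : p ≤ 1 := by nlinarith
  have hU := noHit_upper t b hφ m (hp ▸ hp1)
  rw [← hp] at hU
  have hc := cyl_determined t b (n := n - 1) (by omega)
  -- `1 - (1 - p)^m ≥ 1 - e^{-pm} ≥ pm / 2`, since `pm ≤ 1`
  have hpow : (1 - p) ^ m ≤ 1 - m * p / 2 := by
    have h0 : 0 ≤ m * p := by positivity
    have h1 : m * p ≤ 1 := le_trans (by gcongr) hnp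
    calc (1 - p) ^ m ≤ Real.exp (-p) ^ m :=
          pow_le_pow_left₀ (by linarith) (Real.one_sub_le_exp_neg p) m
      _ = (Real.exp (m * p))⁻¹ := by
          rw [← Real.exp_nat_mul, ← Real.exp_neg]; ring_nf
      _ ≤ (1 + m * p)⁻¹ := by
          gcongr; linarith [Real.add_one_le_exp (m * p)]
      _ ≤ _ := by
          rw [inv_le_iff_one_le_mul₀ (by positivity)]; nlinarith
  have hV := measureReal_nonneg (μ := volume) (s := cyl t b)
  set H := cyl t b \ noHit t b (φ n) m with hH
  have hHm : MeasurableSet H := (measurableSet_cyl t b).diff (measurableSet_noHit t b (φ n) m)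
  have hHd : DeterminedBy (n - 1) H := determined_diff hc (noHit_determined t b (φ n) m hm1)
  have hHl : n * p / 8 * volume.real (cyl t b) ≤ volume.real H := by
    have hsub : noHit t b (φ n) m ⊆ cyl t b := Set.inter_subset_left
    rw [hH, measureReal_sdiff hsub (measurableSet_noHit t b (φ n) m)
      (volume_ne_top hc.1)]
    have h1 : (1 - p) ^ m * volume.real (cyl t b) ≤
        (1 - m * p / 2) * volume.real (cyl t b) := by gcongr
    have h2 : n * p / 8 * volume.real (cyl t b) ≤ m * p / 2 * volume.real (cyl t b) := by
      refine mul_le_mul_of_nonneg_right ?_ hV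
      nlinarith
    linarith
  have hfin := determined_lower_real hHm hHd (measurableSet_largeProd (φ n))
    Set.inter_subset_left (p := p)
    (by rw [hp]; refine le_trans (le_of_eq ?_) (largeProd_lower hφ); ring)
  calc _ = p * (n * p / 8 * volume.real (cyl t b)) := by rw [hp]; field_simp; ring
    _ ≤ p * volume.real H := by gcongr
    _ ≤ _ := hfin
    _ ≤ _ := ?_
  refine measureReal_mono ?_ (volume_ne_top fun x hx => ⟨hx.2.1, hx.2.2.1⟩)
  rintro x ⟨hx, hx'⟩
  have h1 := hx'.2
  simp only [Set.mem_ofPred_eq] at h1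
  rw [pq_iterate _ _ _ le_rfl, pq_iterate _ _ _ one_le_two, show n - 1 + 1 = n by omega,
    show n - 1 + 2 = n + 1 by omega] at h1
  have h2 : ∃ i < m, φ n ≤ (pq x (t + 2 * i + 1) : ℝ) * (pq x (t + 2 * i + 2) : ℝ) := by
    by_contra! hcon
    exact hx.2 ⟨hx.1, hcon⟩
  obtain ⟨i, hi, h3⟩ := h2
  exact ⟨⟨hx.1.1, hx.1.2.1, t + 2 * i + 1, by omega, by omega, h3, h1⟩, hx.1⟩

theorem measure_Aset_inter_cyl_lower (φ : ℕ → ℝ) (hpos : ∀ n, 0 < φ n)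
    (hmono : Monotone φ) (htends : Filter.Tendsto φ Filter.atTop Filter.atTop)
    (hbig : ∀ n : ℕ, 1 ≤ n → (n : ℝ) * Real.log (φ n) ≤ φ n) :
    ∃ c : ℝ, 0 < c ∧ ∀ t : ℕ, ∀ b : ℕ → ℕ, (∀ i : ℕ, 1 ≤ i → i ≤ t → 1 ≤ b i) →
      ∃ N : ℕ, ∀ n : ℕ, N ≤ n →
        ENNReal.ofReal (c * ((φ n + (n : ℝ) * Real.log (φ n) ^ 2) / φ n ^ 2)) *
            volume (cyl t b) ≤ volume (Aset φ n ∩ cyl t b) := by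
  refine ⟨1 / 4096, by norm_num, fun t b _ => ?_⟩
  obtain ⟨N₀, hN₀⟩ := Filter.eventually_atTop.1 (htends.eventually_ge_atTop 1)
  refine ⟨max N₀ (2 * t + 4), fun n hn => ?_⟩
  have hn1 : N₀ ≤ n := le_trans (le_max_left _ _) hn
  have hn2 : 2 * t + 4 ≤ n := le_trans (le_max_right _ _) hn
  have hφ := hN₀ n hn1
  have hφ0 := hpos n
  have hA := Aset_lower_single φ t b (n := n) (by omega) hφ
  have hB := Aset_lower_double φ t b hn2 hφ (Real.log_nonneg hφ) (hbig n (by omega))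
  have hV := measureReal_nonneg (μ := volume) (s := cyl t b)
  have hc : volume (cyl t b) ≠ ∞ := volume_ne_top fun x hx => ⟨hx.1, hx.2.1⟩
  have hI : volume (Aset φ n ∩ cyl t b) ≠ ∞ := volume_ne_top fun x hx => ⟨hx.2.1, hx.2.2.1⟩
  rw [← ofReal_measureReal hc, ← ofReal_measureReal hI, ← ENNReal.ofReal_mul (by positivity)]
  refine ENNReal.ofReal_le_ofReal ?_
  have e : 1 / 4096 * ((φ n + (n : ℝ) * Real.log (φ n) ^ 2) / φ n ^ 2) * volume.real (cyl t b) =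
      1 / 512 * (1 / (8 * φ n) * volume.real (cyl t b)) +
      1 / 2 * (1 / 2048 * ((n : ℝ) * Real.log (φ n) ^ 2 / φ n ^ 2) * volume.real (cyl t b)) := by
    field_simp; ring
  rw [e]
  have := measureReal_nonneg (μ := volume) (s := Aset φ n ∩ cyl t b)
  linarith
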